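/- Let A ⊆ ω not be low for Martin-Löf randomness, P a Π⁰₁ class, τ a finite binary string, and Q a Π⁰₁(A) class containing only A-random sequences. If d(τ,P) ≥ δ > 0, then there exists a string ρ extending τ such that: (1) [ρ] ⊄ Q in the sense that ρ is enumerated out of Q (ρ ∉ Q as a string condition); (2) d(ρ,P) ≥ δ/2. -/

import Mathlib

open MeasureTheory ENNReal

/-! ### Cantor space and the uniform (coin-flipping) measure -/

/-- The binary digits of a real number in `[0,1)`, giving a point of Cantor space. -/
noncomputable def binaryDigits (x : ℝ) : ℕ → Bool :=
  fun n => decide (⌊x * 2 ^ (n + 1)⌋ % 2 = 1)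

/-- The uniform (Lebesgue / coin-flipping) measure on Cantor space `2^ω`,
obtained as the pushforward of Lebesgue measure on `[0,1)` under binary expansion. -/
noncomputable def μCantor : Measure (ℕ → Bool) :=
  Measure.map binaryDigits (volume.restrict (Set.Ico (0 : ℝ) 1))

/-- `σ` is an initial segment of the infinite sequence `X`. -/
def IsPrefixOf (σ : List Bool) (X : ℕ → Bool) : Prop :=
  ∀ i : Fin σ.length, X i = σ.get i

/-- The cylinder determined by a finite binary string. -/
def cylinder (σ : List Bool) : Set (ℕ → Bool) := {X | IsPrefixOf σ X}

/-- The open set generated by a set of finite binary strings. -/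
def openOf (S : Set (List Bool)) : Set (ℕ → Bool) := ⋃ σ ∈ S, cylinder σ

/-- The density of a set `P` above the string `τ`: `μ([τ] ∩ P) · 2^{|τ|}`. -/
noncomputable def dens (τ : List Bool) (P : Set (ℕ → Bool)) : ℝ≥0∞ :=
  μCantor (cylinder τ ∩ P) * 2 ^ τ.length

/-- The length-`n` initial segment of `X`, as a finite binary string. -/
def strPrefix (X : ℕ → Bool) (n : ℕ) : List Bool := (List.range n).map X

/-- A set of strings is prefix-free if no element is a proper prefix of another. -/
def PrefixFreeSet (S : Set (List Bool)) : Prop :=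
  ∀ σ ∈ S, ∀ τ ∈ S, σ <+: τ → σ = τ

/-- The weight `∑_{σ ∈ S} 2^{-|σ|}` of a set of strings. -/
noncomputable def weight (S : Set (List Bool)) : ℝ≥0∞ :=
  ∑' σ : S, 2⁻¹ ^ (σ : List Bool).length

/-- A set of strings is bounded if its weight is finite. -/
def BoundedStr (S : Set (List Bool)) : Prop := weight S < ⊤

/-- The tail `X(·+k)` of an infinite binary sequence. -/
def tailSeq (X : ℕ → Bool) (k : ℕ) : ℕ → Bool := fun n => X (n + k)

/-! ### Oracle computability -/

/-- The `e`-th computably enumerable set of naturals (the domain of the `e`-th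
partial computable function). -/
def WEnum (e n : ℕ) : Prop := ((Denumerable.ofNat Nat.Partrec.Code e).eval n).Dom

/-- `OracleComputes e X n m` holds if the `e`-th Turing functional with oracle `X`
outputs `m` on input `n`; a Turing functional is presented by the c.e. set `W_e`
of coded axioms `(σ, n, m)`, and `Γ_e^X(n) = m` iff some initial segment `σ` of `X`
has `(σ, n, m) ∈ W_e`. -/
def OracleComputes (e : ℕ) (X : ℕ → Bool) (n m : ℕ) : Prop :=
  ∃ σ : List Bool, IsPrefixOf σ X ∧
    WEnum e (Nat.pair (Encodable.encode σ) (Nat.pair n m))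

def natOfBool (b : Bool) : ℕ := cond b 1 0

/-- `f : ℕ → ℕ` is computable with oracle `A`: some Turing functional with oracle `A`
has graph exactly `f`. -/
def FnComputableIn (f : ℕ → ℕ) (A : ℕ → Bool) : Prop :=
  ∃ e, ∀ n m, OracleComputes e A n m ↔ m = f n

/-- Turing reducibility `B ≤_T A` for subsets of `ω` (as elements of Cantor space). -/
def TuringLE (B A : ℕ → Bool) : Prop := FnComputableIn (fun n => natOfBool (B n)) A

/-- Turing equivalence. -/
def TuringEquiv (A B : ℕ → Bool) : Prop := TuringLE A B ∧ TuringLE B A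

/-- The Turing join `A ⊕ B`. -/
def joinSet (A B : ℕ → Bool) : ℕ → Bool :=
  fun n => if n % 2 = 0 then A (n / 2) else B (n / 2)

open Classical in
/-- The Turing jump `A′ = {e : Γ_e^A(e)↓}`. -/
noncomputable def jump (A : ℕ → Bool) : ℕ → Bool :=
  fun e => decide (∃ m, OracleComputes e A e m)

/-- The empty oracle. -/
def emptyOracle : ℕ → Bool := fun _ => false

/-- The halting problem `∅′`. -/
noncomputable def zeroJump : ℕ → Bool := jump emptyOracle

/-- A set is computable iff it is Turing reducible to the empty oracle. -/
def ComputableSet (A : ℕ → Bool) : Prop := TuringLE A emptyOracle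

/-- A set of naturals is c.e. in `A`. -/
def CeIn (A : ℕ → Bool) (S : Set ℕ) : Prop :=
  ∃ e, ∀ n, n ∈ S ↔ ∃ m, OracleComputes e A n m

/-- A set of strings is c.e. in `A`. -/
def CeStrIn (A : ℕ → Bool) (S : Set (List Bool)) : Prop :=
  ∃ e, ∀ σ : List Bool, σ ∈ S ↔ ∃ m, OracleComputes e A (Encodable.encode σ) m

/-- A c.e. set of strings. -/
def CeStr (S : Set (List Bool)) : Prop := CeStrIn emptyOracle S

/-! ### Π⁰₁ classes, Martin-Löf randomness, K-triviality -/

/-- A `Π⁰₁(A)` class: the complement of the union of cylinders over an `A`-c.e.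
set of strings. -/
def Pi01In (A : ℕ → Bool) (P : Set (ℕ → Bool)) : Prop :=
  ∃ S : Set (List Bool), CeStrIn A S ∧ P = (openOf S)ᶜ

/-- A `Π⁰₁` class. -/
def Pi01 (P : Set (ℕ → Bool)) : Prop := Pi01In emptyOracle P

/-- The `n`-th level of the `e`-th `A`-effective sequence of open sets. -/
def testLevel (e : ℕ) (A : ℕ → Bool) (n : ℕ) : Set (ℕ → Bool) :=
  openOf {σ | ∃ m, OracleComputes e A (Nat.pair n (Encodable.encode σ)) m}

/-- A Martin-Löf test relative to `A`: a uniformly `A`-c.e. sequence of open sets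
`G n` with `μ(G n) ≤ 2^{-n}`. -/
def MLTestIn (A : ℕ → Bool) (G : ℕ → Set (ℕ → Bool)) : Prop :=
  (∃ e, ∀ n, G n = testLevel e A n) ∧ ∀ n, μCantor (G n) ≤ 2⁻¹ ^ n

/-- `X` is Martin-Löf random relative to `A`: it passes every `A`-Martin-Löf test. -/
def MLRandomIn (A X : ℕ → Bool) : Prop :=
  ∀ G : ℕ → Set (ℕ → Bool), MLTestIn A G → ∃ n, X ∉ G n

/-- `X` is Martin-Löf random. -/
def MLRandom (X : ℕ → Bool) : Prop := MLRandomIn emptyOracle X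

/-- The domain of the `e`-th machine, viewed as a set of binary strings. -/
def machineDom (e : ℕ) : Set (List Bool) :=
  {σ | ((Denumerable.ofNat Nat.Partrec.Code e).eval (Encodable.encode σ)).Dom}

/-- The `e`-th machine is prefix-free. -/
def PrefixFreeMachine (e : ℕ) : Prop := PrefixFreeSet (machineDom e)

/-- Prefix-free Kolmogorov complexity (defined, up to an additive constant, as the
least `|σ| + 2e + 2` over prefix-free machines `e` and programs `σ` producing `x`). -/
noncomputable def Kcpx (x : ℕ) : ℕ :=
  sInf {k | ∃ e, ∃ σ : List Bool, PrefixFreeMachine e ∧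
    x ∈ (Denumerable.ofNat Nat.Partrec.Code e).eval (Encodable.encode σ) ∧
    k = σ.length + 2 * e + 2}

/-- `K(n)` means `K(1^n)`. -/
noncomputable def KofNat (n : ℕ) : ℕ := Kcpx (Encodable.encode (List.replicate n true))

/-- `A` is K-trivial: `K(A↾n) ≤ K(n) + c` for some constant `c`. -/
def KTrivial (A : ℕ → Bool) : Prop :=
  ∃ c, ∀ n, Kcpx (Encodable.encode (strPrefix A n)) ≤ KofNat n + c

/-! ### Strings and cylinders -/

lemma strPrefix_length (X : ℕ → Bool) (n : ℕ) : (strPrefix X n).length = n := by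
  simp [strPrefix]

lemma strPrefix_getElem (X : ℕ → Bool) (n i : ℕ) (h : i < (strPrefix X n).length) :
    (strPrefix X n)[i] = X i := by
  simp [strPrefix]

lemma mem_cyl {X : ℕ → Bool} {σ : List Bool} :
    X ∈ cylinder σ ↔ strPrefix X σ.length = σ := by
  constructor
  · intro h
    apply List.ext_getElem
    · simp [strPrefix_length]
    · intro i h1 h2
      rw [strPrefix_getElem]
      exact h ⟨i, h2⟩
  · intro h i
    have := strPrefix_getElem X σ.length i (by rw [strPrefix_length]; exact i.2)
    rw [← this]
    simp [h]

lemma mem_cylinder_strPrefix (X : ℕ → Bool) (n : ℕ) : X ∈ cylinder (strPrefix X n) := by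
  rw [mem_cyl, strPrefix_length]

lemma strPrefix_take (X : ℕ → Bool) {i n : ℕ} (h : i ≤ n) :
    (strPrefix X n).take i = strPrefix X i := by
  simp only [strPrefix, ← List.map_take, List.take_range, min_eq_left h]

lemma strPrefix_mono (X : ℕ → Bool) {i n : ℕ} (h : i ≤ n) :
    strPrefix X i <+: strPrefix X n := by
  rw [← strPrefix_take X h]; exact List.take_prefix _ _

lemma cylinder_anti {σ σ' : List Bool} (h : σ <+: σ') : cylinder σ' ⊆ cylinder σ := by
  intro X hX
  rw [mem_cyl] at *
  rw [← strPrefix_take X h.length_le, hX]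
  exact (List.prefix_iff_eq_take.1 h).symm

lemma prefix_of_mem {X : ℕ → Bool} {σ σ' : List Bool} (h : X ∈ cylinder σ)
    (h' : X ∈ cylinder σ') (hl : σ.length ≤ σ'.length) : σ <+: σ' := by
  rw [mem_cyl] at *
  rw [← h, ← h']; simpa [strPrefix_length] using strPrefix_mono X hl

lemma strPrefix_add (X : ℕ → Bool) (a b : ℕ) :
    strPrefix X (a + b) = strPrefix X a ++ strPrefix (tailSeq X a) b := by
  simp [strPrefix, List.range_add, tailSeq, add_comm]

lemma mem_cylinder_append {X : ℕ → Bool} {σ t : List Bool} :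
    X ∈ cylinder (σ ++ t) ↔ X ∈ cylinder σ ∧ tailSeq X σ.length ∈ cylinder t := by
  simp only [mem_cyl, List.length_append, strPrefix_add]
  constructor
  · intro h
    exact List.append_inj h (by simp [strPrefix_length])
  · rintro ⟨h, h'⟩; rw [h, h']

lemma mem_openOf {S : Set (List Bool)} {X : ℕ → Bool} :
    X ∈ openOf S ↔ ∃ n, strPrefix X n ∈ S := by
  simp only [openOf, Set.mem_iUnion, exists_prop, mem_cyl]
  constructor
  · rintro ⟨σ, h, h'⟩; exact ⟨σ.length, by rw [h']; exact h⟩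
  · rintro ⟨n, h⟩; exact ⟨_, h, by rw [strPrefix_length]⟩

/-! ### Measure -/

lemma measurable_binaryDigits : Measurable binaryDigits := by
  rw [measurable_pi_iff]
  intro n
  unfold binaryDigits
  have h : Measurable (fun x : ℝ => ⌊x * 2 ^ (n + 1)⌋) :=
    Int.measurable_floor.comp (measurable_id.mul_const _)
  exact (measurable_of_countable (fun k : ℤ => decide (k % 2 = 1))).comp h

instance : IsProbabilityMeasure μCantor := by
  unfold μCantor
  have : IsProbabilityMeasure (volume.restrict (Set.Ico (0 : ℝ) 1)) :=
    ⟨by simp⟩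
  exact Measure.isProbabilityMeasure_map measurable_binaryDigits.aemeasurable

lemma measurableSet_cylinder (σ : List Bool) : MeasurableSet (cylinder σ) := by
  have : cylinder σ = ⋂ i : Fin σ.length, {X | X i = σ.get i} := by
    ext X; simp [_root_.cylinder, IsPrefixOf]
  rw [this]
  exact MeasurableSet.iInter fun i =>
    measurableSet_eq_fun (measurable_pi_apply (i : ℕ)) measurable_const

lemma measurableSet_openOf (S : Set (List Bool)) : MeasurableSet (openOf S) :=
  MeasurableSet.biUnion (Set.to_countable S) fun σ _ => measurableSet_cylinder σ

lemma floor_digits (x : ℝ) (n : ℕ) :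
    ⌊x * 2 ^ (n + 1)⌋ = 2 * ⌊x * 2 ^ n⌋ + natOfBool (binaryDigits x n) := by
  have h1 : ⌊x * 2 ^ n⌋ = ⌊x * 2 ^ (n + 1)⌋ / 2 := by
    have h2 : x * 2 ^ n = (x * 2 ^ (n + 1)) / (2 : ℕ) := by
      push_cast; rw [pow_succ]; ring
    rw [h2, Int.floor_div_natCast]
    rfl
  rw [h1]
  unfold binaryDigits natOfBool
  by_cases h : ⌊x * 2 ^ (n + 1)⌋ % 2 = 1 <;> simp [h] <;> omega

lemma exists_floor_str (σ : List Bool) : ∃ v : ℤ, 0 ≤ v ∧ v < 2 ^ σ.length ∧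
    ∀ x ∈ Set.Ico (0 : ℝ) 1, binaryDigits x ∈ cylinder σ ↔ ⌊x * 2 ^ σ.length⌋ = v := by
  induction σ using List.reverseRecOn with
  | nil =>
    refine ⟨0, le_rfl, by simp, fun x hx => ?_⟩
    have : ⌊x⌋ = 0 := Int.floor_eq_zero_iff.2 hx
    simp [mem_cyl, strPrefix, this]
  | append_singleton σ b ih =>
    obtain ⟨v, h0, h1, h2⟩ := ih
    have hb : natOfBool b ≤ 1 := by cases b <;> simp [natOfBool]
    refine ⟨2 * v + natOfBool b, by positivity, ?_, fun x hx => ?_⟩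
    · simp only [List.length_append, List.length_singleton, pow_succ]; omega
    · have hc : binaryDigits x ∈ cylinder (σ ++ [b]) ↔
          binaryDigits x ∈ cylinder σ ∧ binaryDigits x σ.length = b := by
        rw [mem_cylinder_append]
        simp [mem_cyl, strPrefix, tailSeq]
      rw [hc, h2 x hx, List.length_append, List.length_singleton, floor_digits x]
      have hb' : natOfBool (binaryDigits x σ.length) ≤ 1 := by
        cases binaryDigits x σ.length <;> simp [natOfBool]
      have he : natOfBool (binaryDigits x σ.length) = natOfBool b ↔
          binaryDigits x σ.length = b := by
        cases binaryDigits x σ.length <;> cases b <;> simp [natOfBool]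
      rw [← he]
      omega

lemma measure_cylinder (σ : List Bool) : μCantor (cylinder σ) = 2⁻¹ ^ σ.length := by
  obtain ⟨v, h0, h1, h2⟩ := exists_floor_str σ
  unfold μCantor
  rw [Measure.map_apply measurable_binaryDigits (measurableSet_cylinder σ),
    Measure.restrict_apply (measurable_binaryDigits (measurableSet_cylinder σ))]
  have hp : (0 : ℝ) < 2 ^ σ.length := by positivity
  have h0' : (0 : ℝ) ≤ v := by exact_mod_cast h0
  have h1' : (v : ℝ) + 1 ≤ 2 ^ σ.length := by exact_mod_cast h1
  have : binaryDigits ⁻¹' cylinder σ ∩ Set.Ico (0 : ℝ) 1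
      = Set.Ico ((v : ℝ) / 2 ^ σ.length) ((v + 1) / 2 ^ σ.length) := by
    ext x
    simp only [Set.mem_inter_iff, Set.mem_preimage]
    constructor
    · rintro ⟨h, hx⟩
      rw [h2 x hx, Int.floor_eq_iff] at h
      exact ⟨by rw [div_le_iff₀ hp]; exact h.1, by rw [lt_div_iff₀ hp]; exact h.2⟩
    · rintro ⟨ha, hb⟩
      have hx : x ∈ Set.Ico (0 : ℝ) 1 :=
        ⟨le_trans (by positivity) ha, lt_of_lt_of_le hb (by rw [div_le_one hp]; exact h1')⟩
      refine ⟨?_, hx⟩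
      rw [h2 x hx, Int.floor_eq_iff]
      rw [div_le_iff₀ hp] at ha
      rw [lt_div_iff₀ hp] at hb
      exact ⟨ha, hb⟩
  rw [this, Real.volume_Ico, ← sub_div, add_sub_cancel_left, one_div,
    ENNReal.ofReal_inv_of_pos hp, ENNReal.ofReal_pow (by norm_num), ENNReal.inv_pow]
  simp

lemma measure_openOf_le (S : Set (List Bool)) : μCantor (openOf S) ≤ weight S := by
  unfold openOf weight
  refine (measure_biUnion_le μCantor (Set.to_countable S) cylinder).trans ?_
  simp [measure_cylinder]

lemma disjoint_cylinder {σ σ' : List Bool} (h : ¬ σ <+: σ') (h' : ¬ σ' <+: σ) :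
    Disjoint (cylinder σ) (cylinder σ') := by
  rw [Set.disjoint_left]
  intro X hX hX'
  rcases le_total σ.length σ'.length with hl | hl
  · exact h (prefix_of_mem hX hX' hl)
  · exact h' (prefix_of_mem hX' hX hl)

lemma PrefixFreeSet.pairwiseDisjoint {S : Set (List Bool)} (hS : PrefixFreeSet S) :
    S.PairwiseDisjoint cylinder := by
  intro σ hσ σ' hσ' hne
  exact disjoint_cylinder (fun h => hne (hS _ hσ _ hσ' h)) (fun h => hne (hS _ hσ' _ hσ h).symm)

lemma measure_openOf {S : Set (List Bool)} (hS : PrefixFreeSet S) :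
    μCantor (openOf S) = weight S := by
  unfold openOf weight
  rw [measure_biUnion (Set.to_countable S) hS.pairwiseDisjoint
    (fun σ _ => measurableSet_cylinder σ)]
  simp [measure_cylinder]

/-- The minimal strings in `S`. -/
def minStr (S : Set (List Bool)) : Set (List Bool) :=
  {σ | σ ∈ S ∧ ∀ i < σ.length, σ.take i ∉ S}

lemma minStr_prefixFree (S : Set (List Bool)) : PrefixFreeSet (minStr S) := by
  intro σ hσ τ hτ h
  by_contra hne
  have hl : σ.length < τ.length := by
    rcases h.length_le.lt_or_eq with h1 | h1
    · exact h1
    · exact absurd (h.eq_of_length h1) hne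
  have := hτ.2 _ hl
  rw [← List.prefix_iff_eq_take.1 h] at this
  exact this hσ.1

lemma openOf_minStr (S : Set (List Bool)) : openOf (minStr S) = openOf S := by
  classical
  ext X
  rw [mem_openOf, mem_openOf]
  constructor
  · rintro ⟨n, h⟩; exact ⟨n, h.1⟩
  · intro h
    refine ⟨Nat.find h, Nat.find_spec h, fun i hi => ?_⟩
    rw [strPrefix_length] at hi
    rw [strPrefix_take X hi.le]
    exact Nat.find_min h hi

/-! ### Computability -/

lemma wenum_of_primrecPred {D : ℕ → Prop} (hD : PrimrecPred D) :
    ∃ e, ∀ n, WEnum e n ↔ D n := by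
  classical
  have h1 : Primrec (fun n => decide (D n)) := hD.decide
  have h2 : Partrec (fun n : ℕ => (bif decide (D n) then Part.some 0 else Part.none : Part ℕ)) :=
    Partrec.cond h1.to_comp (Computable.const 0).partrec Partrec.none
  obtain ⟨c, hc⟩ := Nat.Partrec.Code.exists_code.1 (Partrec.nat_iff.1 h2)
  refine ⟨Encodable.encode c, fun n => ?_⟩
  unfold WEnum
  rw [Denumerable.ofNat_encode, hc]
  by_cases h : D n <;> simp [h]

lemma wenum_precomp (e : ℕ) {f : ℕ → ℕ} (hf : Primrec f) :
    ∃ e', ∀ n, WEnum e' n ↔ WEnum e (f n) := by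
  obtain ⟨c, hc⟩ := Nat.Partrec.Code.exists_code.1 (Partrec.nat_iff.1 hf.to_comp.partrec)
  refine ⟨Encodable.encode ((Denumerable.ofNat Nat.Partrec.Code e).comp c), fun n => ?_⟩
  unfold WEnum
  rw [Denumerable.ofNat_encode, Nat.Partrec.Code.eval, hc]
  have : (f : ℕ →. ℕ) n >>= (Denumerable.ofNat Nat.Partrec.Code e).eval
      = (Denumerable.ofNat Nat.Partrec.Code e).eval (f n) := Part.bind_some _ _
  exact iff_of_eq (congrArg Part.Dom this)

lemma primrec_decodeStr {α : Type} [Primcodable α] :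
    Primrec (fun n : ℕ => ((Encodable.decode n : Option (List α))).getD []) :=
  Primrec.option_getD.comp Primrec.decode (Primrec.const [])

lemma primrec_u1 : Primrec (fun n : ℕ => n.unpair.1) := Primrec.fst.comp Primrec.unpair
lemma primrec_u2 : Primrec (fun n : ℕ => n.unpair.2) := Primrec.snd.comp Primrec.unpair

lemma primrec_exists_len {R : ℕ → List Bool → Prop}
    (hR : PrimrecPred (fun p : ℕ × List Bool => R p.1 p.2)) :
    PrimrecPred (fun σ : List Bool => ∃ i < σ.length, R i σ) := by
  have h : PrimrecRel R := hR
  exact (h.exists_mem_list.comp (Primrec.list_range.comp Primrec.list_length) Primrec.id).of_eq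
    (by simp)

theorem tail_random (A X : ℕ → Bool) (k : ℕ) (h : MLRandomIn A (tailSeq X k)) :
    MLRandomIn A X := by
  intro G hG
  by_contra hX
  push Not at hX
  obtain ⟨⟨e, he⟩, hm⟩ := hG
  set ξ := strPrefix X k with hξ
  have hξl : ξ.length = k := strPrefix_length X k
  obtain ⟨e', he'⟩ := wenum_precomp e
    (f := fun x => Nat.pair x.unpair.1 (Nat.pair (Nat.pair (x.unpair.2.unpair.1.unpair.1 + k)
      (Encodable.encode ((ξ ++ ((Encodable.decode x.unpair.2.unpair.1.unpair.2 :
        Option (List Bool))).getD []).take x.unpair.2.unpair.2.unpair.1)))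
        x.unpair.2.unpair.2.unpair.2)) (by
      have h21 := primrec_u1.comp primrec_u2
      have h22 := primrec_u2.comp primrec_u2
      refine Primrec₂.natPair.comp primrec_u1 (Primrec₂.natPair.comp (Primrec₂.natPair.comp
        (Primrec.nat_add.comp (primrec_u1.comp h21) (Primrec.const k))
        (Primrec.encode.comp (Primrec.list_take.comp (primrec_u1.comp h22)
          (Primrec.list_append.comp (Primrec.const ξ)
            (primrec_decodeStr.comp (primrec_u2.comp h21)))))) (primrec_u2.comp h22)))
  have key : ∀ n (σ : List Bool), (∃ m, OracleComputes e' A (Nat.pair n (Encodable.encode σ)) m) ↔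
      ∃ i m, OracleComputes e A (Nat.pair (n + k) (Encodable.encode ((ξ ++ σ).take i))) m := by
    intro n σ
    unfold OracleComputes
    constructor
    · rintro ⟨m, α, hα, hw⟩
      rw [he'] at hw
      simp only [Nat.unpair_pair, Encodable.encodek, Option.getD_some] at hw
      exact ⟨_, _, α, hα, hw⟩
    · rintro ⟨i, m, α, hα, hw⟩
      refine ⟨Nat.pair i m, α, hα, ?_⟩
      rw [he']
      simpa only [Nat.unpair_pair, Encodable.encodek, Option.getD_some] using hw
  obtain ⟨n, hn⟩ := h (testLevel e' A) ⟨⟨e', fun _ => rfl⟩, fun n => by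
    unfold testLevel
    rw [← openOf_minStr, measure_openOf (minStr_prefixFree _)]
    set M := minStr {σ | ∃ m, OracleComputes e' A (Nat.pair n (Encodable.encode σ)) m} with hM
    have hpf : PrefixFreeSet M := minStr_prefixFree _
    have hpf' : PrefixFreeSet ((fun σ => ξ ++ σ) '' M) := by
      rintro _ ⟨σ, hσ, rfl⟩ _ ⟨σ', hσ', rfl⟩ hp
      simp only [List.prefix_append_right_inj] at hp
      rw [hpf _ hσ _ hσ' hp]
    have hw : weight ((fun σ => ξ ++ σ) '' M) = 2⁻¹ ^ k * weight M := by
      unfold weight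
      have hinj : Set.InjOn (fun σ => ξ ++ σ) M := fun a _ b _ hab => by simpa using hab
      rw [tsum_image (fun σ : List Bool => (2⁻¹ : ℝ≥0∞) ^ σ.length) hinj, ← ENNReal.tsum_mul_left]
      simp [pow_add, hξl]
    have hsub : openOf ((fun σ => ξ ++ σ) '' M) ⊆ G (n + k) := by
      rw [he]
      intro Y hY
      simp only [openOf, Set.mem_iUnion] at hY
      obtain ⟨_, ⟨σ, hσ, rfl⟩, hY⟩ := hY
      obtain ⟨i, hi⟩ := (key n σ).1 hσ.1
      simp only [testLevel, openOf, Set.mem_iUnion]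
      exact ⟨_, hi, cylinder_anti (List.take_prefix _ _) hY⟩
    have h1 : 2⁻¹ ^ k * weight M ≤ 2⁻¹ ^ k * 2⁻¹ ^ n := by
      rw [← hw, ← measure_openOf hpf', ← pow_add, add_comm k n]
      exact (measure_mono hsub).trans (hm _)
    have h2 : (2⁻¹ : ℝ≥0∞) ^ k ≠ 0 := pow_ne_zero _ (by simp)
    have h3 : (2⁻¹ : ℝ≥0∞) ^ k ≠ ⊤ := ENNReal.pow_ne_top (by simp)
    exact (ENNReal.mul_le_mul_iff_right h2 h3).1 h1⟩
  apply hn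
  have := hX (n + k)
  rw [he, testLevel, mem_openOf] at this
  obtain ⟨j, hj⟩ := this
  rw [testLevel, mem_openOf]
  refine ⟨j, ?_⟩
  rw [Set.mem_ofPred_eq, key]
  refine ⟨j, ?_⟩
  rw [hξ, ← strPrefix_add, strPrefix_take _ (by omega)]
  exact hj

/-- Concatenations of `n` elements of `M`. -/
def powStr (M : Set (List Bool)) (n : ℕ) : Set (List Bool) :=
  {σ | ∃ L : List (List Bool), L.length = n ∧ (∀ s ∈ L, s ∈ M) ∧ L.flatten = σ}

lemma weight_powStr_le (M : Set (List Bool)) (n : ℕ) : weight (powStr M n) ≤ weight M ^ n := by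
  induction n with
  | zero =>
    have : powStr M 0 = {[]} := by
      ext σ
      simp only [powStr, List.length_eq_zero_iff, Set.mem_ofPred_eq, Set.mem_singleton_iff]
      constructor
      · rintro ⟨L, rfl, -, rfl⟩; rfl
      · rintro rfl; exact ⟨[], rfl, by simp, rfl⟩
    rw [this]
    unfold weight
    rw [tsum_singleton ([] : List Bool) (fun σ : List Bool => (2⁻¹ : ℝ≥0∞) ^ σ.length)]
    simp
  | succ n ih =>
    have hmem : ∀ p : M × powStr M n, (p.1 : List Bool) ++ p.2 ∈ powStr M (n + 1) := by
      rintro ⟨⟨a, ha⟩, ⟨b, L, hl, hL, rfl⟩⟩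
      exact ⟨a :: L, by simp [hl], by simpa using ⟨ha, hL⟩, by simp⟩
    let f : M × powStr M n → powStr M (n + 1) := fun p => ⟨_, hmem p⟩
    have hf : Function.Surjective f := by
      rintro ⟨σ, L, hl, hL, rfl⟩
      match L, hl, hL with
      | a :: L, hl, hL =>
        refine ⟨⟨⟨a, hL a (by simp)⟩, ⟨L.flatten, L, by simpa using hl,
          fun s hs => hL s (by simp [hs]), rfl⟩⟩, ?_⟩
        simp [f]
    calc weight (powStr M (n + 1)) ≤ ∑' p : M × powStr M n, (2⁻¹ : ℝ≥0∞) ^ (f p : List Bool).length :=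
          ENNReal.tsum_le_tsum_comp_of_surjective hf _
      _ = weight M * weight (powStr M n) := by
          simp only [f, List.length_append, pow_add]
          rw [ENNReal.tsum_prod (f := fun (a : M) (b : powStr M n) =>
            (2⁻¹ : ℝ≥0∞) ^ (a : List Bool).length * 2⁻¹ ^ (b : List Bool).length)]
          simp_rw [ENNReal.tsum_mul_left, ENNReal.tsum_mul_right]
          rfl
      _ ≤ weight M ^ (n + 1) := by
          rw [pow_succ']; gcongr

theorem kucera (S : Set (List Bool)) (hS : PrimrecPred (fun σ => σ ∈ S))
    (hμ : μCantor (openOf S) < 1) (X : ℕ → Bool) (hX : MLRandom X) :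
    ∃ k, tailSeq X k ∉ openOf S := by
  by_contra hall
  push Not at hall
  set M := minStr S with hM
  have hMp : PrimrecPred (fun σ => σ ∈ M) := by
    have hr2 : PrimrecPred (fun σ : List Bool => ∀ i < σ.length, σ.take i ∉ S) :=
      (primrec_exists_len (R := fun i σ => σ.take i ∈ S)
        (hS.comp (Primrec.list_take.comp Primrec.fst Primrec.snd))).not.of_eq (by simp)
    exact hS.and hr2
  have hw : weight M < 1 := by
    rw [← measure_openOf (minStr_prefixFree S), openOf_minStr]; exact hμ
  obtain ⟨k, hk⟩ : ∃ k, weight M ^ k ≤ 2⁻¹ := by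
    obtain ⟨k, hk⟩ := ((ENNReal.tendsto_pow_atTop_nhds_zero_of_lt_one hw).eventually
      (ge_mem_nhds (show (0 : ℝ≥0∞) < 2⁻¹ by simp))).exists
    exact ⟨k, hk⟩
  obtain ⟨e, he⟩ := wenum_of_primrecPred (D := fun x =>
    (((Encodable.decode x.unpair.2.unpair.2 : Option (List (List Bool)))).getD []).length
      = x.unpair.2.unpair.1.unpair.1 * k ∧
    (∀ s ∈ ((Encodable.decode x.unpair.2.unpair.2 : Option (List (List Bool)))).getD [], s ∈ M) ∧
    Encodable.encode (((Encodable.decode x.unpair.2.unpair.2 :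
      Option (List (List Bool)))).getD []).flatten = x.unpair.2.unpair.1.unpair.2) (by
      have h21 := primrec_u1.comp primrec_u2
      have h22 := (primrec_decodeStr (α := List Bool)).comp (primrec_u2.comp primrec_u2)
      exact (Primrec.eq.comp (Primrec.list_length.comp h22)
        (Primrec.nat_mul.comp (primrec_u1.comp h21) (Primrec.const k))).and
        ((hMp.forall_mem_list.comp h22).and
        (Primrec.eq.comp (Primrec.encode.comp (Primrec.list_flatten.comp h22))
          (primrec_u2.comp h21))))
  have key : ∀ n, testLevel e emptyOracle n = openOf (powStr M (n * k)) := by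
    intro n
    unfold testLevel
    congr 1
    ext σ
    simp only [Set.mem_ofPred_eq, OracleComputes, powStr, he, Nat.unpair_pair]
    constructor
    · rintro ⟨m, α, hα, h1, h2, h3⟩
      exact ⟨_, h1, h2, Encodable.encode_injective h3⟩
    · rintro ⟨L, h1, h2, h3⟩
      refine ⟨Encodable.encode L, [], fun i => i.elim0, ?_⟩
      simp only [Encodable.encodek, Option.getD_some]
      exact ⟨h1, h2, by rw [h3]⟩
  have hp : ∀ n j, ∃ i, strPrefix (tailSeq X j) i ∈ powStr M n := by
    intro n
    induction n with
    | zero => exact fun j => ⟨0, [], rfl, by simp, by simp [strPrefix]⟩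
    | succ n ih =>
      intro j
      have := hall j
      rw [← openOf_minStr, mem_openOf] at this
      obtain ⟨a, ha⟩ := this
      obtain ⟨b, L, hl, hL, hb⟩ := ih (j + a)
      refine ⟨a + b, strPrefix (tailSeq X j) a :: L, by simp [hl], by simpa using ⟨ha, hL⟩, ?_⟩
      have ht : tailSeq (tailSeq X j) a = tailSeq X (j + a) := by
        funext n; simp only [tailSeq]; congr 1; omega
      rw [strPrefix_add, ht, List.flatten_cons, hb]
  obtain ⟨n, hn⟩ := hX (testLevel e emptyOracle) ⟨⟨e, fun _ => rfl⟩, fun n => by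
    rw [key]
    refine (measure_openOf_le _).trans ((weight_powStr_le _ _).trans ?_)
    rw [mul_comm, pow_mul]
    gcongr⟩
  apply hn
  rw [key, mem_openOf]
  exact hp (n * k) 0

/-! ### Approximating a class -/

lemma pi01_approx {P : Set (ℕ → Bool)} (hP : Pi01 P) : ∃ R : Set (List Bool),
    PrimrecPred (fun σ => σ ∈ R) ∧ (∀ ρ ρ', ρ <+: ρ' → ρ ∈ R → ρ' ∈ R) ∧ P = (openOf R)ᶜ := by
  obtain ⟨S, ⟨e, he⟩, rfl⟩ := hP
  set c := Denumerable.ofNat Nat.Partrec.Code e with hc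
  let inp : ℕ → List Bool → ℕ := fun w ρ =>
    Nat.pair (Encodable.encode ((List.range w.unpair.2.unpair.2).map (fun _ => false)))
      (Nat.pair (Encodable.encode (ρ.take w.unpair.1)) w.unpair.2.unpair.1)
  let R : Set (List Bool) :=
    {ρ | ∃ w < ρ.length, (Nat.Partrec.Code.evaln ρ.length c (inp w ρ)).isSome = true}
  have hmono : ∀ ρ ρ', ρ <+: ρ' → ρ ∈ R → ρ' ∈ R := by
    rintro ρ ρ' h ⟨w, hw, hs⟩
    refine ⟨w, hw.trans_le h.length_le, ?_⟩
    have hi : inp w ρ' = inp w ρ := by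
      simp only [inp]
      have hle : w.unpair.1 ≤ ρ.length := (Nat.unpair_left_le w).trans hw.le
      obtain ⟨s, rfl⟩ := h
      rw [List.take_append_of_le_length hle]
    rw [hi]
    rw [Option.isSome_iff_exists] at hs ⊢
    obtain ⟨x, hx⟩ := hs
    exact ⟨x, Nat.Partrec.Code.evaln_mono h.length_le hx⟩
  refine ⟨R, ?_, hmono, ?_⟩
  · have hinp : Primrec (fun p : ℕ × List Bool => inp p.1 p.2) := by
      have h2 := primrec_u2.comp (Primrec.fst (α := ℕ) (β := List Bool))
      refine Primrec₂.natPair.comp (Primrec.encode.comp (Primrec.list_map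
        (Primrec.list_range.comp (primrec_u2.comp h2)) (Primrec.const false).to₂))
        (Primrec₂.natPair.comp (Primrec.encode.comp (Primrec.list_take.comp
          (primrec_u1.comp Primrec.fst) Primrec.snd)) (primrec_u1.comp h2))
    have hrel : PrimrecPred (fun p : ℕ × List Bool =>
        (Nat.Partrec.Code.evaln p.2.length c (inp p.1 p.2)).isSome = true) := by
      have h := Primrec.option_isSome.comp (Nat.Partrec.Code.primrec_evaln.comp
        (((Primrec.list_length.comp Primrec.snd).pair (Primrec.const c)).pair hinp))
      exact Primrec.eq.comp h (Primrec.const true)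
    exact primrec_exists_len (R := fun w ρ =>
      (Nat.Partrec.Code.evaln ρ.length c (inp w ρ)).isSome = true) hrel
  · congr 1
    ext X
    rw [mem_openOf, mem_openOf]
    constructor
    · rintro ⟨n, hn⟩
      rw [he] at hn
      obtain ⟨m, α, hα, hw⟩ := hn
      have hα' : α = (List.range α.length).map (fun _ => false) := by
        have := mem_cyl.1 (show emptyOracle ∈ cylinder α from hα)
        exact this.symm
      unfold WEnum at hw
      obtain ⟨x, hx⟩ := Part.dom_iff_mem.1 hw
      obtain ⟨k, hk⟩ := Nat.Partrec.Code.evaln_complete.1 hx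
      set w := Nat.pair n (Nat.pair m α.length) with hwd
      refine ⟨max k (w + 1), w, ?_, ?_⟩
      · rw [strPrefix_length]; omega
      · rw [strPrefix_length, Option.isSome_iff_exists]
        refine ⟨x, Nat.Partrec.Code.evaln_mono (le_max_left k (w + 1)) ?_⟩
        have hnw : n ≤ w := Nat.left_le_pair _ _
        have : inp w (strPrefix X (max k (w + 1))) =
            Nat.pair (Encodable.encode α) (Nat.pair (Encodable.encode (strPrefix X n)) m) := by
          simp only [inp, hwd, Nat.unpair_pair]
          rw [← hα', strPrefix_take]
          exact hnw.trans (le_trans (Nat.le_succ _) (le_max_right _ _))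
        rw [this]
        exact hk
    · rintro ⟨n, w, hw, hs⟩
      rw [strPrefix_length] at hw
      rw [Option.isSome_iff_exists] at hs
      obtain ⟨x, hx⟩ := hs
      refine ⟨w.unpair.1, ?_⟩
      rw [he]
      refine ⟨w.unpair.2.unpair.1, (List.range w.unpair.2.unpair.2).map (fun _ => false), ?_, ?_⟩
      · exact mem_cylinder_strPrefix emptyOracle _
      · unfold WEnum
        have := Nat.Partrec.Code.evaln_sound hx
        simp only [inp] at this
        rw [strPrefix_take _ ((Nat.unpair_left_le w).trans hw.le)] at this
        exact Part.dom_iff_mem.2 ⟨x, this⟩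

/-- All strings of a given length. -/
def allStr : ℕ → List (List Bool)
  | 0 => [[]]
  | n + 1 => (allStr n).map (List.cons false) ++ (allStr n).map (List.cons true)

lemma mem_allStr (n : ℕ) (σ : List Bool) : σ ∈ allStr n ↔ σ.length = n := by
  induction n generalizing σ with
  | zero => simp [allStr]
  | succ n ih =>
    cases σ with
    | nil => simp [allStr]
    | cons b σ => cases b <;> simp [allStr, ih]

lemma nodup_allStr (n : ℕ) : (allStr n).Nodup := by
  induction n with
  | zero => simp [allStr]
  | succ n ih =>
    rw [allStr, List.nodup_append]
    refine ⟨ih.map (List.cons_injective), ih.map (List.cons_injective), ?_⟩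
    intro a ha b hb
    simp only [List.mem_map] at ha hb
    obtain ⟨_, _, rfl⟩ := ha
    obtain ⟨_, _, rfl⟩ := hb
    simp

lemma length_allStr (n : ℕ) : (allStr n).length = 2 ^ n := by
  induction n with
  | zero => simp [allStr]
  | succ n ih => simp [allStr, ih, pow_succ]; ring

lemma primrec_allStr : Primrec allStr := by
  have h : Primrec (Nat.rec [[]] (fun _ (L : List (List Bool)) =>
      L.map (List.cons false) ++ L.map (List.cons true)) : ℕ → List (List Bool)) := by
    refine Primrec.nat_rec₁ _ ?_
    refine Primrec.list_append.comp (Primrec.list_map Primrec.snd ?_)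
      (Primrec.list_map Primrec.snd ?_)
    · exact Primrec.list_cons.comp (Primrec.const false) Primrec.snd
    · exact Primrec.list_cons.comp (Primrec.const true) Primrec.snd
  refine h.of_eq fun n => ?_
  induction n with
  | zero => rfl
  | succ n ih => simp only [allStr, ← ih]

open Classical in
/-- The number of extensions of `σ` by `t` bits that are not in `R`. -/
noncomputable def cnt (R : Set (List Bool)) (σ : List Bool) (t : ℕ) : ℕ :=
  ((allStr t).filter (fun v => decide (σ ++ v ∉ R))).length

lemma primrec_cnt {R : Set (List Bool)} (hR : PrimrecPred (fun σ => σ ∈ R)) :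
    Primrec (fun p : List Bool × ℕ => cnt R p.1 p.2) := by
  classical
  have hrel : PrimrecRel (fun (v : List Bool) (σ : List Bool) => σ ++ v ∉ R) :=
    (hR.not.comp (Primrec.list_append.comp Primrec.snd Primrec.fst) :
      PrimrecPred (fun p : List Bool × List Bool => p.2 ++ p.1 ∉ R))
  have h := Primrec.list_length.comp (hrel.listFilter.comp (primrec_allStr.comp Primrec.snd)
    (Primrec.fst (α := List Bool) (β := ℕ)))
  refine h.of_eq fun p => ?_
  simp only [cnt]

lemma measure_cnt (R : Set (List Bool)) (σ : List Bool) (t : ℕ) :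
    μCantor (cylinder σ ∩ {X | strPrefix X (σ.length + t) ∉ R})
      = cnt R σ t * 2⁻¹ ^ (σ.length + t) := by
  classical
  set F := ((allStr t).filter (fun v => decide (σ ++ v ∉ R))).toFinset with hF
  have hset : cylinder σ ∩ {X | strPrefix X (σ.length + t) ∉ R}
      = ⋃ v ∈ F, cylinder (σ ++ v) := by
    ext X
    simp only [Set.mem_inter_iff, Set.mem_ofPred_eq, Set.mem_iUnion, hF, List.mem_toFinset,
      List.mem_filter, mem_allStr, decide_eq_true_eq, exists_prop]
    constructor
    · rintro ⟨h1, h2⟩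
      refine ⟨strPrefix (tailSeq X σ.length) t, ⟨strPrefix_length _ _, ?_⟩, ?_⟩
      · rw [strPrefix_add, mem_cyl.1 h1] at h2; exact h2
      · exact mem_cylinder_append.2 ⟨h1, mem_cylinder_strPrefix _ _⟩
    · rintro ⟨v, ⟨hl, hv⟩, hX⟩
      refine ⟨cylinder_anti (List.prefix_append _ _) hX, ?_⟩
      rw [mem_cyl, List.length_append, hl] at hX
      rw [hX]; exact hv
  rw [hset, measure_biUnion_finset]
  · have hc : F.card = cnt R σ t := by
      rw [hF, List.toFinset_card_of_nodup ((nodup_allStr t).filter _), cnt]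
    have : ∀ v ∈ F, μCantor (cylinder (σ ++ v)) = 2⁻¹ ^ (σ.length + t) := by
      intro v hv
      simp only [hF, List.mem_toFinset, List.mem_filter, mem_allStr] at hv
      rw [measure_cylinder, List.length_append, hv.1]
    rw [Finset.sum_congr rfl this, Finset.sum_const, hc, nsmul_eq_mul]
  · intro v hv v' hv' hne
    simp only [hF, Finset.mem_coe, List.mem_toFinset, List.mem_filter, mem_allStr] at hv hv'
    apply disjoint_cylinder
    · intro h
      rw [List.prefix_append_right_inj] at h
      exact hne (h.eq_of_length (by rw [hv.1, hv'.1]))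
    · intro h
      rw [List.prefix_append_right_inj] at h
      exact hne (h.eq_of_length (by rw [hv.1, hv'.1])).symm
  · exact fun v _ => measurableSet_cylinder _

lemma half_pow_mul (n : ℕ) : (2⁻¹ : ℝ≥0∞) ^ n * 2 ^ n = 1 := by
  rw [← mul_pow, ENNReal.inv_mul_cancel (by simp) (by simp), one_pow]

lemma dens_le_cnt (R : Set (List Bool)) (σ : List Bool) (t : ℕ) :
    dens σ (openOf R)ᶜ ≤ cnt R σ t / 2 ^ t := by
  have h : cylinder σ ∩ (openOf R)ᶜ ⊆ cylinder σ ∩ {X | strPrefix X (σ.length + t) ∉ R} := by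
    rintro X ⟨h1, h2⟩
    exact ⟨h1, fun h => h2 (mem_openOf.2 ⟨_, h⟩)⟩
  unfold dens
  calc μCantor (cylinder σ ∩ (openOf R)ᶜ) * 2 ^ σ.length
      ≤ (cnt R σ t * 2⁻¹ ^ (σ.length + t)) * 2 ^ σ.length := by
        rw [← measure_cnt]; gcongr
    _ = cnt R σ t * 2⁻¹ ^ t * (2⁻¹ ^ σ.length * 2 ^ σ.length) := by rw [pow_add]; ring
    _ = _ := by rw [half_pow_mul, mul_one, ← ENNReal.inv_pow, div_eq_mul_inv]

lemma le_dens (R : Set (List Bool)) (hR : ∀ ρ ρ', ρ <+: ρ' → ρ ∈ R → ρ' ∈ R) (σ : List Bool)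
    (q : ℝ≥0∞) (h : ∀ t, q ≤ cnt R σ t / 2 ^ t) : q ≤ dens σ (openOf R)ᶜ := by
  let E : ℕ → Set (ℕ → Bool) := fun t => cylinder σ ∩ {X | strPrefix X (σ.length + t) ∉ R}
  have hE : cylinder σ ∩ (openOf R)ᶜ = ⋂ t, E t := by
    ext X
    simp only [E, Set.mem_inter_iff, Set.mem_iInter, Set.mem_compl_iff, mem_openOf,
      Set.mem_ofPred_eq, not_exists]
    constructor
    · rintro ⟨h1, h2⟩ t; exact ⟨h1, h2 _⟩
    · intro hh
      refine ⟨(hh 0).1, fun n hn => (hh n).2 ?_⟩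
      exact hR _ _ (strPrefix_mono X (by omega)) hn
  have hanti : Antitone E := by
    intro s t hst X hX
    exact ⟨hX.1, fun hh => hX.2 (hR _ _ (strPrefix_mono X (by omega)) hh)⟩
  have hmeas : ∀ t, MeasurableSet (E t) := by
    intro t
    have : {X : ℕ → Bool | strPrefix X (σ.length + t) ∉ R}
        = (openOf {ρ | ρ ∈ R ∧ ρ.length = σ.length + t})ᶜ := by
      ext X
      simp only [Set.mem_ofPred_eq, Set.mem_compl_iff, mem_openOf, strPrefix_length]
      simp
    exact (measurableSet_cylinder σ).inter (this ▸ (measurableSet_openOf _).compl)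
  have hlim := tendsto_measure_iInter_atTop (μ := μCantor) (fun t => (hmeas t).nullMeasurableSet)
    hanti ⟨0, measure_ne_top _ _⟩
  rw [← hE] at hlim
  have hge : q * 2⁻¹ ^ σ.length ≤ μCantor (cylinder σ ∩ (openOf R)ᶜ) := by
    refine ge_of_tendsto' hlim fun t => ?_
    simp only [Function.comp, E, measure_cnt]
    rw [pow_add, mul_left_comm, mul_comm]
    gcongr
    rw [← ENNReal.inv_pow, ← div_eq_mul_inv]
    exact h t
  unfold dens
  calc q = q * 2⁻¹ ^ σ.length * 2 ^ σ.length := by rw [mul_assoc, half_pow_mul, mul_one]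
    _ ≤ _ := by gcongr

/-- extension lemma: if `A` is not low for ML-randomness, one can
extend `τ` to a string `ρ` out of `Q` while keeping half the density in `P`. -/
theorem stmt8 (A : ℕ → Bool)
    (hA : ¬ ∀ X : ℕ → Bool, MLRandom X → MLRandomIn A X)
    (P Q : Set (ℕ → Bool)) (hP : Pi01 P)
    (hQ : Pi01In A Q) (hQrand : ∀ X ∈ Q, MLRandomIn A X)
    (τ : List Bool) (δ : ℝ≥0∞) (hδ : 0 < δ) (hd : δ ≤ dens τ P) :
    ∃ ρ : List Bool, τ <+: ρ ∧ cylinder ρ ∩ Q = ∅ ∧ δ / 2 ≤ dens ρ P := by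
  obtain ⟨R, hRp, hRm, rfl⟩ := pi01_approx hP
  obtain ⟨T, -, rfl⟩ := hQ
  by_contra hno
  push Not at hno
  apply hA
  intro X hX
  have hfin : dens τ (openOf R)ᶜ ≠ ⊤ := by
    unfold dens
    exact ENNReal.mul_ne_top (measure_ne_top _ _) (ENNReal.pow_ne_top (by simp))
  have hδt : δ ≠ ⊤ := ne_top_of_le_ne_top hfin hd
  obtain ⟨q, hq0, hq1, hq2⟩ :=
    ENNReal.lt_iff_exists_rat_btwn.1 (ENNReal.half_lt_self hδ.ne' hδt)
  obtain ⟨a, K, hK, hqe⟩ : ∃ a K : ℕ, K ≠ 0 ∧ ((Real.toNNReal (q : ℝ) : NNReal) : ℝ≥0∞) = a / K := by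
    refine ⟨q.num.toNat, q.den, q.den_ne_zero, ?_⟩
    have hn : (0 : ℤ) ≤ q.num := Rat.num_nonneg.2 hq0
    have h1 : (q : ℝ) = (q.num.toNat : ℝ) / (q.den : ℝ) := by
      have h2 : ((q.num.toNat : ℤ) : ℝ) = (q.num : ℝ) := by rw [Int.toNat_of_nonneg hn]
      rw [← Int.cast_natCast q.num.toNat, h2]
      exact_mod_cast (Rat.num_div_den q).symm
    have hd0 : (0 : ℝ) < q.den := by exact_mod_cast q.den_pos
    change ENNReal.ofReal (q : ℝ) = _
    rw [h1, ENNReal.ofReal_div_of_pos hd0, ENNReal.ofReal_natCast, ENNReal.ofReal_natCast]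
  rw [hqe] at hq1 hq2
  have hK0 : (K : ℝ≥0∞) ≠ 0 := by exact_mod_cast hK
  have hKt : (K : ℝ≥0∞) ≠ ⊤ := ENNReal.natCast_ne_top K
  have hcmp : ∀ c t : ℕ, a * 2 ^ t ≤ c * K ↔ (a : ℝ≥0∞) / K ≤ c / 2 ^ t := by
    intro c t
    rw [ENNReal.div_le_iff hK0 hKt, mul_comm ((c : ℝ≥0∞) / _), ← mul_div_assoc,
      ENNReal.le_div_iff_mul_le (Or.inl (by simp)) (Or.inl (ENNReal.pow_ne_top (by simp)))]
    rw [mul_comm c K]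
    exact_mod_cast Iff.rfl
  -- the effectively open set
  let U : Set (List Bool) := {ρ | (τ.length ≤ ρ.length ∧ ρ.take τ.length ≠ τ) ∨
    ∃ w < ρ.length, τ.length ≤ w.unpair.1 ∧
      cnt R (ρ.take w.unpair.1) w.unpair.2 * K < a * (allStr w.unpair.2).length}
  have hUp : PrimrecPred (fun ρ => ρ ∈ U) := by
    refine PrimrecPred.or (PrimrecPred.and (Primrec.nat_le.comp (Primrec.const _)
      Primrec.list_length) (PrimrecPred.not (Primrec.eq.comp
        (Primrec.list_take.comp (Primrec.const _) Primrec.id) (Primrec.const _))))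
      (primrec_exists_len (R := fun w ρ => τ.length ≤ w.unpair.1 ∧
        cnt R (ρ.take w.unpair.1) w.unpair.2 * K < a * (allStr w.unpair.2).length) ?_)
    have h1 := primrec_u1.comp (Primrec.fst (α := ℕ) (β := List Bool))
    have h2 := primrec_u2.comp (Primrec.fst (α := ℕ) (β := List Bool))
    refine PrimrecPred.and (Primrec.nat_le.comp (Primrec.const _) h1)
      (Primrec.nat_lt.comp (Primrec.nat_mul.comp ((primrec_cnt hRp).comp
        ((Primrec.list_take.comp h1 Primrec.snd).pair h2)) (Primrec.const K))
        (Primrec.nat_mul.comp (Primrec.const a)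
          (Primrec.list_length.comp (primrec_allStr.comp h2))))
  have hsub : ∀ Y, Y ∉ openOf U → Y ∈ (openOf T)ᶜ := by
    intro Y hY
    rw [mem_openOf] at hY
    push Not at hY
    have hτ : strPrefix Y τ.length = τ := by
      by_contra hne
      apply hY τ.length
      left
      rw [strPrefix_length, strPrefix_take _ le_rfl]
      exact ⟨le_rfl, hne⟩
    have hdens : ∀ n, τ.length ≤ n → δ / 2 ≤ dens (strPrefix Y n) (openOf R)ᶜ := by
      intro n hn
      refine hq1.le.trans (le_dens R hRm _ _ fun t => ?_)
      rw [← hcmp]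
      by_contra hlt
      apply hY (Nat.pair n t + 1)
      right
      refine ⟨Nat.pair n t, by rw [strPrefix_length]; omega, ?_⟩
      have hle : n ≤ Nat.pair n t + 1 := (Nat.left_le_pair n t).trans (Nat.le_succ _)
      rw [Nat.unpair_pair, strPrefix_take _ hle, length_allStr]
      exact ⟨hn, not_le.1 hlt⟩
    intro hT
    obtain ⟨n, hn⟩ := mem_openOf.1 hT
    have hm := hdens (max n τ.length) (le_max_right _ _)
    refine absurd hm (not_le.2 (hno _ ?_ ?_))
    · have := strPrefix_mono Y (le_max_right n τ.length)
      rwa [hτ] at this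
    · ext Z
      simp only [Set.mem_inter_iff, Set.mem_empty_iff_false, iff_false, not_and]
      intro hZ hZT
      apply hZT
      have := cylinder_anti (strPrefix_mono Y (le_max_left n τ.length)) hZ
      simp only [openOf, Set.mem_iUnion]
      exact ⟨_, hn, this⟩
  have hmeasU : μCantor (openOf U) < 1 := by
    by_contra hge
    have h1 : μCantor (openOf U) = 1 := le_antisymm prob_le_one (not_lt.1 hge)
    have h0 : μCantor (openOf U)ᶜ = 0 := (prob_compl_eq_zero_iff (measurableSet_openOf U)).2 h1
    let B : Set (List Bool) := {σ | τ <+: σ ∧ dens σ (openOf R)ᶜ < a / K}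
    have hcov : cylinder τ ∩ (openOf R)ᶜ ⊆
        (⋃ σ ∈ minStr B, cylinder σ ∩ (openOf R)ᶜ) ∪ (openOf U)ᶜ := by
      rintro Y ⟨hYτ, hYR⟩
      by_cases hYU : Y ∈ openOf U
      · left
        have hB : Y ∈ openOf B := by
          obtain ⟨n, hn⟩ := mem_openOf.1 hYU
          rcases hn with ⟨hl, hne⟩ | ⟨w, hw, hle, hc⟩
          · rw [strPrefix_length] at hl
            rw [strPrefix_take _ hl] at hne
            exact absurd (mem_cyl.1 hYτ) hne
          · rw [strPrefix_length] at hw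
            rw [strPrefix_take _ ((Nat.unpair_left_le w).trans hw.le), length_allStr] at hc
            refine mem_openOf.2 ⟨w.unpair.1, ?_, ?_⟩
            · have := strPrefix_mono Y hle
              rwa [mem_cyl.1 hYτ] at this
            · refine (dens_le_cnt R _ w.unpair.2).trans_lt ?_
              rw [← not_le, ← hcmp, not_le]
              exact hc
        rw [← openOf_minStr] at hB
        simp only [openOf, Set.mem_iUnion] at hB
        obtain ⟨σ, hσ, hYσ⟩ := hB
        simp only [Set.mem_iUnion]
        exact ⟨σ, hσ, hYσ, hYR⟩
      · exact Or.inr hYU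
    have hle : μCantor (cylinder τ ∩ (openOf R)ᶜ) ≤ a / K * 2⁻¹ ^ τ.length := by
      calc μCantor (cylinder τ ∩ (openOf R)ᶜ)
          ≤ μCantor (⋃ σ ∈ minStr B, cylinder σ ∩ (openOf R)ᶜ) + μCantor (openOf U)ᶜ :=
            (measure_mono hcov).trans (measure_union_le _ _)
        _ = μCantor (⋃ σ ∈ minStr B, cylinder σ ∩ (openOf R)ᶜ) := by rw [h0, add_zero]
        _ ≤ ∑' σ : minStr B, μCantor (cylinder σ ∩ (openOf R)ᶜ) :=
            measure_biUnion_le _ (Set.to_countable _) _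
        _ ≤ ∑' σ : minStr B, (a / K : ℝ≥0∞) * 2⁻¹ ^ (σ : List Bool).length := by
            refine ENNReal.tsum_le_tsum fun σ => ?_
            have h2 : dens σ (openOf R)ᶜ ≤ a / K := (σ.2.1.2).le
            calc μCantor (cylinder σ ∩ (openOf R)ᶜ)
                = dens σ (openOf R)ᶜ * 2⁻¹ ^ (σ : List Bool).length := by
                  unfold dens
                  rw [mul_assoc, mul_comm (2 ^ _), half_pow_mul, mul_one]
              _ ≤ _ := by gcongr
        _ = a / K * μCantor (openOf (minStr B)) := by
            rw [ENNReal.tsum_mul_left, measure_openOf (minStr_prefixFree B)]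
            rfl
        _ ≤ a / K * μCantor (cylinder τ) := by
            gcongr
            intro Y hY
            simp only [openOf, Set.mem_iUnion] at hY
            obtain ⟨σ, hσ, hYσ⟩ := hY
            exact cylinder_anti hσ.1.1 hYσ
        _ = _ := by rw [measure_cylinder]
    have : dens τ (openOf R)ᶜ ≤ a / K := by
      unfold dens
      calc μCantor (cylinder τ ∩ (openOf R)ᶜ) * 2 ^ τ.length
          ≤ (a / K : ℝ≥0∞) * 2⁻¹ ^ τ.length * 2 ^ τ.length := by gcongr
        _ = a / K := by rw [mul_assoc, half_pow_mul, mul_one]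
    exact absurd (hd.trans this) (not_le.2 hq2)
  obtain ⟨k, hk⟩ := kucera U hUp hmeasU X hX
  exact tail_random A X k (hQrand _ (hsub _ hk))
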